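/- For every integer n ≥ 2, the set of unordered pairs {A, −A} with A ranging over the set 𝒪_n of orientation sign matrices of totally nonzero tuples v : {1,…,n} → ℝ² (i.e., the image of 𝒪_n under the map A ↦ {A, −A}) has cardinality 2^{n−2}·(n−1)!. -/

import Mathlib

/-- The determinant of the 2×2 matrix with columns `v` and `w`. -/
noncomputable def det2 (v w : ℝ × ℝ) : ℝ := v.1 * w.2 - v.2 * w.1

/-- A tuple `v : Fin n → ℝ²` is totally nonzero if `det (v i | v j) ≠ 0` for all `i ≠ j`. -/
def TotallyNonzero (n : ℕ) (v : Fin n → ℝ × ℝ) : Prop :=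
  ∀ i j : Fin n, i ≠ j → det2 (v i) (v j) ≠ 0

/-- The orientation sign matrix of a tuple: `(O_v)_{ij} = sgn (det (v i | v j))`. -/
noncomputable def orientMatrix (n : ℕ) (v : Fin n → ℝ × ℝ) : Matrix (Fin n) (Fin n) ℝ :=
  Matrix.of fun i j => Real.sign (det2 (v i) (v j))

/-!
Fix the first vector `v₀` of a totally nonzero tuple. Every other `vⱼ` lies strictly on one side of
the line through `v₀`, which gives a sign `εⱼ`, and up to that sign it has a cotangent `tⱼ` with
respect to `v₀`. Since `det (vᵢ | vⱼ)` is a positive multiple of `εᵢ εⱼ (tᵢ - tⱼ)`, the orientation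
sign matrix amounts to the signs `ε` together with the order of the distinct numbers `tⱼ`, that is,
a permutation. Hence `𝒪_{m+1}` has `2 ^ m * m!` elements. For `m ≥ 1`, negation is an involution of
`𝒪_{m+1}` without fixed points, so the pairs `{A, -A}` are half as many.
-/

open Function Equiv
open SignType (sign)
open scoped Nat

section Counting

theorem two_mul_ncard_image_pair {α : Type*} {S : Set α} (hS : S.Finite) {f : α → α}
    (hf : Involutive f) (hmaps : Set.MapsTo f S S) (hfix : ∀ a ∈ S, f a ≠ a) :
    2 * ((fun a => ({a, f a} : Set α)) '' S).ncard = S.ncard := by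
  classical
  lift S to Finset α using hS
  have card_fiber : ∀ P ∈ S.image fun a => ({a, f a} : Set α),
      (S.filter fun b => ({b, f b} : Set α) = P).card = 2 := by
    intro P hP
    obtain ⟨a, ha, rfl⟩ := Finset.mem_image.1 hP
    rw [← Finset.card_pair (hfix a ha).symm]
    congr 1
    ext b
    have hfa : f a ∈ S := hmaps ha
    simp only [Finset.mem_filter, Finset.mem_insert, Finset.mem_singleton, Set.pair_eq_pair_iff]
    constructor
    · tauto
    · rintro (rfl | rfl) <;> simp [ha, hfa, hf _]
  rw [← Finset.coe_image, Set.ncard_coe_finset, Set.ncard_coe_finset,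
    Finset.card_eq_sum_card_image (fun a => ({a, f a} : Set α)) S,
    Finset.sum_const_nat card_fiber, mul_comm]

theorem existsUnique_perm_lt_iff_lt {α : Type*} [LinearOrder α] {m : ℕ} {t : Fin m → α}
    (ht : Injective t) : ∃! σ : Perm (Fin m), ∀ i j, σ i < σ j ↔ t i < t j := by
  have sorted : StrictMono (t ∘ Tuple.sort t) :=
    (Tuple.monotone_sort t).strictMono_of_injective (ht.comp (Tuple.sort t).injective)
  refine ⟨(Tuple.sort t)⁻¹, fun i j => ?_, fun σ hσ => ?_⟩
  · simpa using (sorted.lt_iff_lt (a := (Tuple.sort t)⁻¹ i) (b := (Tuple.sort t)⁻¹ j)).symm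
  · have mono : StrictMono (σ * Tuple.sort t) := fun i j hij => (hσ _ _).2 (sorted hij)
    exact eq_inv_of_mul_eq_one_left ((Perm.monotone_iff _).1 mono.monotone)

end Counting

section Signs

theorem sign_eq_sign_iff {α β : Type*} [Zero α] [Preorder α] [DecidableLT α] [Zero β] [Preorder β]
    [DecidableLT β] {x : α} {y : β} :
    sign x = sign y ↔ (0 < x ↔ 0 < y) ∧ (x < 0 ↔ y < 0) := by
  rw [← sign_eq_one_iff, ← sign_eq_one_iff, ← sign_eq_neg_one_iff, ← sign_eq_neg_one_iff]
  generalize sign x = a, sign y = b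
  decide +revert

theorem realSign_eq_realSign_iff {x y : ℝ} : Real.sign x = Real.sign y ↔ sign x = sign y := by
  simp only [Real.sign, sign_eq_sign_iff]
  grind

theorem forall_sign_sub_eq_iff {ι α β : Type*} [AddCommGroup α] [LinearOrder α]
    [IsOrderedAddMonoid α] [AddCommGroup β] [LinearOrder β] [IsOrderedAddMonoid β]
    {s : ι → α} {t : ι → β} :
    (∀ i j, sign (s i - s j) = sign (t i - t j)) ↔ ∀ i j, s i < s j ↔ t i < t j := by
  simp only [sign_eq_sign_iff, sub_pos, sub_neg]
  exact ⟨fun h i j => (h i j).2, fun h i j => ⟨h j i, h i j⟩⟩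

theorem sign_units_inj {R : Type*} [Ring R] [LinearOrder R] [IsStrictOrderedRing R] {u w : ℤˣ} :
    sign ((u : ℤ) : R) = sign ((w : ℤ) : R) ↔ u = w := by
  rcases Int.units_eq_one_or u with rfl | rfl <;> rcases Int.units_eq_one_or w with rfl | rfl <;>
    simp

theorem exists_units_sign_eq {R : Type*} [Ring R] [LinearOrder R] [IsStrictOrderedRing R] {x : R}
    (hx : x ≠ 0) : ∃ u : ℤˣ, sign ((u : ℤ) : R) = sign x := by
  rcases hx.lt_or_gt with hneg | hpos
  · exact ⟨-1, by simp [sign_neg hneg]⟩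
  · exact ⟨1, by simp [sign_pos hpos]⟩

end Signs

section Determinant

theorem det2_swap (v w : ℝ × ℝ) : det2 w v = -det2 v w := by
  simp only [det2]
  ring

theorem det2_self (v : ℝ × ℝ) : det2 v v = 0 := by
  simp only [det2]
  ring

theorem det2_prodSwap (v w : ℝ × ℝ) : det2 v.swap w.swap = -det2 v w := by
  simp only [det2, Prod.fst_swap, Prod.snd_swap]
  ring

/-- The cotangent of the oriented angle from `u` to `v`; it is `0` when `det2 u v = 0`. -/
noncomputable def cot2 (u v : ℝ × ℝ) : ℝ := (u.1 * v.1 + u.2 * v.2) / det2 u v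

theorem normSq_mul_det2 {u v w : ℝ × ℝ} (hv : det2 u v ≠ 0) (hw : det2 u w ≠ 0) :
    (u.1 ^ 2 + u.2 ^ 2) * det2 v w = det2 u v * det2 u w * (cot2 u v - cot2 u w) := by
  rw [cot2, cot2]
  field_simp
  simp only [det2]
  ring

theorem normSq_pos_of_det2_ne_zero {u v : ℝ × ℝ} (h : det2 u v ≠ 0) :
    0 < u.1 ^ 2 + u.2 ^ 2 := by
  have hu : u.1 ≠ 0 ∨ u.2 ≠ 0 := by
    contrapose! h
    simp [det2, h]
  rcases hu with h₁ | h₂ <;> positivity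

theorem sign_det2_eq {u v w : ℝ × ℝ} (hv : det2 u v ≠ 0) (hw : det2 u w ≠ 0) :
    sign (det2 v w) = sign (det2 u v) * sign (det2 u w) * sign (cot2 u v - cot2 u w) := by
  rw [← sign_mul, ← sign_mul, ← normSq_mul_det2 hv hw, sign_mul,
    sign_pos (normSq_pos_of_det2_ne_zero hv), one_mul]

end Determinant

section OrientMatrix

variable {n m : ℕ}

theorem totallyNonzero_iff_orientMatrix_ne_zero {v : Fin n → ℝ × ℝ} :
    TotallyNonzero n v ↔ ∀ i j, i ≠ j → orientMatrix n v i j ≠ 0 := by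
  simp only [TotallyNonzero, orientMatrix, Matrix.of_apply, ne_eq, Real.sign_eq_zero_iff]

theorem totallyNonzero_succ_iff {v : Fin (m + 1) → ℝ × ℝ} :
    TotallyNonzero (m + 1) v ↔ (∀ j : Fin m, det2 (v 0) (v j.succ) ≠ 0) ∧
      ∀ i j : Fin m, i ≠ j → det2 (v i.succ) (v j.succ) ≠ 0 := by
  have swap (j : Fin m) := det2_swap (v 0) (v j.succ)
  simp [TotallyNonzero, Fin.forall_fin_succ, swap, forall_and, Fin.succ_ne_zero,
    (Fin.succ_ne_zero _).symm]

theorem orientMatrix_eq_iff {v w : Fin n → ℝ × ℝ} :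
    orientMatrix n v = orientMatrix n w ↔
      ∀ i j, sign (det2 (v i) (v j)) = sign (det2 (w i) (w j)) := by
  simp only [← Matrix.ext_iff, orientMatrix, Matrix.of_apply, realSign_eq_realSign_iff]

theorem orientMatrix_succ_eq_iff {v w : Fin (m + 1) → ℝ × ℝ} :
    orientMatrix (m + 1) v = orientMatrix (m + 1) w ↔
      (∀ j : Fin m, sign (det2 (v 0) (v j.succ)) = sign (det2 (w 0) (w j.succ))) ∧
      ∀ i j : Fin m, sign (det2 (v i.succ) (v j.succ)) = sign (det2 (w i.succ) (w j.succ)) := by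
  have swap (u : Fin (m + 1) → ℝ × ℝ) (j : Fin m) := det2_swap (u 0) (u j.succ)
  simp [orientMatrix_eq_iff, Fin.forall_fin_succ, det2_self, swap, Left.sign_neg, forall_and]

theorem neg_orientMatrix (v : Fin n → ℝ × ℝ) :
    -orientMatrix n v = orientMatrix n (Prod.swap ∘ v) := by
  ext i j
  simp only [orientMatrix, Matrix.neg_apply, Matrix.of_apply, comp_apply, det2_prodSwap,
    Real.sign_neg]

end OrientMatrix

section NormalTuple

variable {m : ℕ} {ε ε' : Fin m → ℤˣ} {t t' : Fin m → ℝ}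

/-- The normal form of a tuple with nonzero determinants against its first vector: that vector is
`(1, 0)`, and each other one has the prescribed cotangent `t j` and the prescribed sign `ε j` of
its determinant with `(1, 0)`. -/
def normalTuple (ε : Fin m → ℤˣ) (t : Fin m → ℝ) : Fin (m + 1) → ℝ × ℝ :=
  Fin.cons (1, 0) fun j => (((ε j : ℤ) : ℝ) * t j, ((ε j : ℤ) : ℝ))

theorem det2_normalTuple_zero_succ (j : Fin m) :
    det2 (normalTuple ε t 0) (normalTuple ε t j.succ) = (ε j : ℤ) := by
  simp [normalTuple, det2]

theorem det2_normalTuple_succ_succ (i j : Fin m) :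
    det2 (normalTuple ε t i.succ) (normalTuple ε t j.succ) =
      ((ε i : ℤ) : ℝ) * ((ε j : ℤ) : ℝ) * (t i - t j) := by
  simp only [normalTuple, det2, Fin.cons_succ]
  ring

theorem totallyNonzero_normalTuple_iff :
    TotallyNonzero (m + 1) (normalTuple ε t) ↔ Injective t := by
  simp only [totallyNonzero_succ_iff, det2_normalTuple_zero_succ, det2_normalTuple_succ_succ]
  simp [Injective, sub_eq_zero, not_imp_not]

theorem orientMatrix_normalTuple_eq_iff :
    orientMatrix (m + 1) (normalTuple ε t) = orientMatrix (m + 1) (normalTuple ε' t') ↔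
      ε = ε' ∧ ∀ i j, t i < t j ↔ t' i < t' j := by
  simp only [orientMatrix_succ_eq_iff, det2_normalTuple_zero_succ, det2_normalTuple_succ_succ,
    sign_mul, sign_units_inj, funext_iff (f := ε)]
  refine and_congr_right fun hε => ?_
  obtain rfl : ε = ε' := funext hε
  have ne_zero (i j : Fin m) : sign ((ε i : ℤ) : ℝ) * sign ((ε j : ℤ) : ℝ) ≠ 0 := by simp
  simp only [mul_right_inj' (ne_zero _ _), forall_sign_sub_eq_iff]

theorem exists_orientMatrix_normalTuple_eq {v : Fin (m + 1) → ℝ × ℝ}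
    (hv : ∀ j : Fin m, det2 (v 0) (v j.succ) ≠ 0) :
    ∃ ε t, orientMatrix (m + 1) (normalTuple ε t) = orientMatrix (m + 1) v := by
  choose ε hε using fun j => exists_units_sign_eq (hv j)
  refine ⟨ε, fun j => cot2 (v 0) (v j.succ),
    orientMatrix_succ_eq_iff.2 ⟨fun j => ?_, fun i j => ?_⟩⟩
  · rw [det2_normalTuple_zero_succ, hε]
  · rw [det2_normalTuple_succ_succ, sign_mul, sign_mul, hε, hε, sign_det2_eq (hv i) (hv j)]

end NormalTuple

section OrientationMatrices

variable {n : ℕ} {A : Matrix (Fin n) (Fin n) ℝ}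

/-- The set `𝒪_n` of orientation sign matrices of totally nonzero `n`-tuples. -/
def orientationMatrices (n : ℕ) : Set (Matrix (Fin n) (Fin n) ℝ) :=
  {A | ∃ v : Fin n → ℝ × ℝ, TotallyNonzero n v ∧ A = orientMatrix n v}

theorem orientationMatrices_apply_ne_zero (hA : A ∈ orientationMatrices n) {i j : Fin n}
    (hij : i ≠ j) : A i j ≠ 0 := by
  obtain ⟨v, hv, rfl⟩ := hA
  exact totallyNonzero_iff_orientMatrix_ne_zero.1 hv i j hij

theorem neg_mem_orientationMatrices (hA : A ∈ orientationMatrices n) :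
    -A ∈ orientationMatrices n := by
  obtain ⟨v, hv, rfl⟩ := hA
  refine ⟨Prod.swap ∘ v, fun i j hij => ?_, neg_orientMatrix v⟩
  rw [comp_apply, comp_apply, det2_prodSwap]
  exact neg_ne_zero.2 (hv i j hij)

theorem neg_ne_self_of_mem_orientationMatrices [Nontrivial (Fin n)]
    (hA : A ∈ orientationMatrices n) : -A ≠ A := by
  obtain ⟨i, j, hij⟩ := exists_pair_ne (Fin n)
  exact fun h => orientationMatrices_apply_ne_zero hA hij (self_eq_neg.1 congr($h i j).symm)

/-- The orientation sign matrix with signs `p.1` in the first row after the diagonal, and with the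
`j`-th remaining vector of rank `p.2 j` in the order of the cotangents. -/
noncomputable def normalMatrix {m : ℕ} (p : (Fin m → ℤˣ) × Perm (Fin m)) :
    Matrix (Fin (m + 1)) (Fin (m + 1)) ℝ :=
  orientMatrix (m + 1) (normalTuple p.1 fun j => ((p.2 j : ℕ) : ℝ))

theorem normalMatrix_injective (m : ℕ) : Injective (normalMatrix (m := m)) := by
  rintro ⟨ε, σ⟩ ⟨ε', σ'⟩ h
  obtain ⟨rfl, hσ⟩ := orientMatrix_normalTuple_eq_iff.1 h
  simp only [Nat.cast_lt, Fin.val_fin_lt] at hσ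
  rw [(existsUnique_perm_lt_iff_lt σ'.injective).unique hσ fun _ _ => Iff.rfl]

theorem range_normalMatrix (m : ℕ) :
    Set.range (normalMatrix (m := m)) = orientationMatrices (m + 1) := by
  ext A
  constructor
  · rintro ⟨⟨ε, σ⟩, rfl⟩
    exact ⟨_, totallyNonzero_normalTuple_iff.2
      (Nat.cast_injective.comp (Fin.val_injective.comp σ.injective)), rfl⟩
  · rintro ⟨v, hv, rfl⟩
    obtain ⟨ε, t, h⟩ :=
      exists_orientMatrix_normalTuple_eq fun j => hv 0 j.succ (Fin.succ_ne_zero j).symm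
    have ht : Injective t := by
      rwa [totallyNonzero_iff_orientMatrix_ne_zero, ← h,
        ← totallyNonzero_iff_orientMatrix_ne_zero, totallyNonzero_normalTuple_iff] at hv
    obtain ⟨σ, hσ, -⟩ := existsUnique_perm_lt_iff_lt ht
    refine ⟨(ε, σ), Eq.trans (orientMatrix_normalTuple_eq_iff.2 ⟨rfl, ?_⟩) h⟩
    simpa only [Nat.cast_lt, Fin.val_fin_lt] using hσ

theorem finite_orientationMatrices (m : ℕ) : (orientationMatrices (m + 1)).Finite :=
  range_normalMatrix m ▸ Set.finite_range _

theorem ncard_orientationMatrices (m : ℕ) : (orientationMatrices (m + 1)).ncard = 2 ^ m * m ! := by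
  rw [← range_normalMatrix, Set.ncard_range_of_injective (normalMatrix_injective m),
    Nat.card_eq_fintype_card]
  simp [Fintype.card_perm]

end OrientationMatrices

/-- for `n ≥ 2`, the image of `𝒪_n` under `A ↦ {A, -A}` has cardinality
`2^(n-2) · (n-1)!`. -/
theorem stmt_4 (n : ℕ) (hn : 2 ≤ n) :
    ((fun A => ({A, -A} : Set (Matrix (Fin n) (Fin n) ℝ))) ''
        {A : Matrix (Fin n) (Fin n) ℝ |
          ∃ v : Fin n → ℝ × ℝ, TotallyNonzero n v ∧ A = orientMatrix n v}).ncard =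
      2 ^ (n - 2) * Nat.factorial (n - 1) := by
  obtain ⟨k, rfl⟩ := Nat.exists_eq_add_of_le' hn
  have count := two_mul_ncard_image_pair (finite_orientationMatrices (k + 1)) neg_involutive
    (fun _ => neg_mem_orientationMatrices) fun _ => neg_ne_self_of_mem_orientationMatrices
  rw [ncard_orientationMatrices, pow_succ', mul_assoc] at count
  exact Nat.eq_of_mul_eq_mul_left two_pos count
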